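/- For every real number a not of the form -j/2 with j a nonnegative integer, and every real z with 0 < z < 1: Φ_HCB(1,a,z) = (4^a / (C(2a,a)·a)) · ( z^{2a} / √(1-z²) ) · ₂F₁(1/2, a-1/2; a+1/2; z²). -/

import Mathlib

/-- The generalized binomial coefficient `C(x,y) = Γ(x+1)/(Γ(y+1) Γ(x-y+1))`. -/
noncomputable def genBinom (x y : ℝ) : ℝ :=
  Real.Gamma (x + 1) / (Real.Gamma (y + 1) * Real.Gamma (x - y + 1))

/-- The Hurwitz–Lerch type central binomial series
`Φ_HCB(s,a,z) = ∑_{n≥0} (2z)^{2(n+a)} / ( C(2(n+a), n+a) (n+a)^s )`. -/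
noncomputable def PhiHCB (s : ℤ) (a z : ℝ) : ℝ :=
  ∑' n : ℕ, (2 * z) ^ (2 * ((n : ℝ) + a)) /
    (genBinom (2 * ((n : ℝ) + a)) ((n : ℝ) + a) * ((n : ℝ) + a) ^ s)

/-- The shifted factorial (Pochhammer symbol) `(α)_n = α(α+1)⋯(α+n-1)`, `(α)_0 = 1`. -/
def poch (α : ℝ) : ℕ → ℝ
  | 0 => 1
  | n + 1 => poch α n * (α + n)

/-- The Gauss hypergeometric series `₂F₁(α,β;γ;z) = ∑_{n≥0} (α)_n (β)_n / ((γ)_n n!) zⁿ`. -/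
noncomputable def Gauss2F1 (α β γ z : ℝ) : ℝ :=
  ∑' n : ℕ, poch α n * poch β n / (poch γ n * (Nat.factorial n : ℝ)) * z ^ n

/-!
Writing the central binomial coefficient through the duplication formula for `Γ`, the series
`Φ_HCB(1, a, z)` becomes a multiple of `₂F₁(a, 1; a + 1/2; z²)`, and Euler's transformation
`₂F₁(a, b; c; x) = (1 - x)^(c - a - b) ₂F₁(c - a, c - b; c; x)` does the rest.

For Euler's transformation, Gauss's differential operator with parameters `(a, b, c)` is, on formal
power series, conjugate under multiplication by `(1 - X)^(c - a - b)` to the one with parameters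
`(c - a, c - b, c)`, and its kernel is spanned by the hypergeometric series as long as `c` is not a
nonpositive integer.
-/

open PowerSeries

section FormalPowerSeries

section CommRing

variable {R : Type*} [CommRing R]

/-- The hypergeometric differential operator of Gauss,
`X (1 - X) D² + (c - (a + b + 1) X) D - a b`, on formal power series, `D` being `d/dX`. -/
noncomputable def hypergeometricOperator (a b c : R) (f : R⟦X⟧) : R⟦X⟧ :=
  X * (1 - X) * d⁄dX R (d⁄dX R f) + (C c - C (a + b + 1) * X) * d⁄dX R f - C (a * b) * f

lemma coeff_hypergeometricOperator (a b c : R) (f : R⟦X⟧) (n : ℕ) :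
    coeff n (hypergeometricOperator a b c f) =
      (n + 1) * (c + n) * coeff (n + 1) f - (a + n) * (b + n) * coeff n f := by
  have expand : hypergeometricOperator a b c f =
      X * d⁄dX R (d⁄dX R f) - X * (X * d⁄dX R (d⁄dX R f)) + C c * d⁄dX R f
        - C (a + b + 1) * (X * d⁄dX R f) - C (a * b) * f := by
    rw [hypergeometricOperator]
    ring
  rw [expand]
  rcases n with _ | _ | n <;>
    simp only [LinearMap.map_add, LinearMap.map_sub, coeff_C_mul, coeff_succ_X_mul,
      coeff_zero_X_mul, coeff_derivative] <;>
    push_cast <;> ring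

lemma isUnit_one_sub_X : IsUnit (1 - X : R⟦X⟧) :=
  .of_mul_eq_one_right _ (mk_one_mul_one_sub_eq_one R)

lemma hypergeometricOperator_mul {a b c : R} {B : R⟦X⟧}
    (hB : (1 - X) * d⁄dX R B = C (a + b - c) * B) (f : R⟦X⟧) :
    hypergeometricOperator a b c (B * f) = B * hypergeometricOperator (c - a) (c - b) c f := by
  have hB' := congrArg (d⁄dX R) hB
  simp only [Derivation.leibniz, map_sub, map_add, smul_eq_mul, derivative_X, derivative_C,
    Derivation.map_one_eq_zero] at hB hB'
  apply isUnit_one_sub_X.mul_left_cancel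
  simp only [hypergeometricOperator, Derivation.leibniz, map_sub, map_add, map_mul, map_one,
    smul_eq_mul]
  -- The derivative of `hB` eliminates the second derivative of `B`, then `hB` the first.
  linear_combination X * (1 - X) * f * hB' +
    (X * (1 + C a + C b - C c) * f + 2 * X * (1 - X) * d⁄dX R f +
      (C c - (C a + C b + 1) * X) * f) * hB

/-- The negative binomial series `∑ r (r + 1) ⋯ (r + n - 1) / n! Xⁿ`, which expands `(1 - X)^(-r)`
for an exponent `r` in a binomial ring. -/
noncomputable def negBinomialSeries [BinomialRing R] (r : R) : R⟦X⟧ :=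
  .mk fun n => Ring.multichoose r n

lemma succ_mul_multichoose_succ [BinomialRing R] (r : R) (n : ℕ) :
    (n + 1) * Ring.multichoose r (n + 1) = (r + n) * Ring.multichoose r n := by
  have : IsAddTorsionFree R := BinomialRing.toIsAddTorsionFree
  have hn := Ring.factorial_nsmul_multichoose_eq_ascPochhammer r n
  have hn' := Ring.factorial_nsmul_multichoose_eq_ascPochhammer r (n + 1)
  rw [Polynomial.ascPochhammer_smeval_eq_eval, nsmul_eq_mul] at hn hn'
  rw [ascPochhammer_succ_eval, Nat.factorial_succ, Nat.cast_mul, Nat.cast_succ] at hn'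
  apply nsmul_right_injective n.factorial_ne_zero
  simp only [nsmul_eq_mul]
  linear_combination hn' - (r + n) * hn

lemma one_sub_X_mul_derivative_negBinomialSeries [BinomialRing R] (r : R) :
    (1 - X) * d⁄dX R (negBinomialSeries r) = C r * negBinomialSeries r := by
  ext n
  have h := succ_mul_multichoose_succ r n
  rw [sub_mul, one_mul, map_sub, coeff_C_mul, coeff_derivative]
  rcases n with _ | n
  · simp [negBinomialSeries]
  · rw [coeff_succ_X_mul, coeff_derivative]
    simp only [negBinomialSeries, coeff_mk]
    push_cast at h ⊢
    linear_combination h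

end CommRing

section Field

variable {K : Type*} [Field K] [CharZero K]

/-- The Gauss hypergeometric series `₂F₁(a, b; c; X)` as a formal power series. -/
noncomputable def hypergeometricPowerSeries (a b c : K) : K⟦X⟧ :=
  .mk (ordinaryHypergeometricCoefficient a b c)

lemma ordinaryHypergeometricCoefficient_succ (a b : K) {c : K} {n : ℕ} (hc : c + n ≠ 0) :
    (n + 1) * (c + n) * ordinaryHypergeometricCoefficient a b c (n + 1) =
      (a + n) * (b + n) * ordinaryHypergeometricCoefficient a b c n := by
  have hn : (n + 1 : K) ≠ 0 := n.cast_add_one_ne_zero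
  simp only [ordinaryHypergeometricCoefficient, ascPochhammer_succ_eval, Nat.factorial_succ,
    Nat.cast_mul, Nat.cast_succ]
  field_simp

lemma hypergeometricOperator_hypergeometricPowerSeries (a b : K) {c : K}
    (hc : ∀ n : ℕ, c + n ≠ 0) :
    hypergeometricOperator a b c (hypergeometricPowerSeries a b c) = 0 := by
  ext n
  rw [coeff_hypergeometricOperator, map_zero, sub_eq_zero, hypergeometricPowerSeries, coeff_mk,
    coeff_mk]
  exact ordinaryHypergeometricCoefficient_succ a b (hc n)

lemma eq_of_hypergeometricOperator_eq_zero {a b c : K} (hc : ∀ n : ℕ, c + n ≠ 0) {f g : K⟦X⟧}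
    (hf : hypergeometricOperator a b c f = 0) (hg : hypergeometricOperator a b c g = 0)
    (h0 : coeff 0 f = coeff 0 g) : f = g := by
  ext n
  induction n with
  | zero => exact h0
  | succ n ih =>
    have hfn := coeff_hypergeometricOperator a b c f n
    have hgn := coeff_hypergeometricOperator a b c g n
    rw [hf, map_zero] at hfn
    rw [hg, map_zero] at hgn
    apply mul_left_cancel₀ (mul_ne_zero n.cast_add_one_ne_zero (hc n))
    linear_combination hgn - hfn + (a + n) * (b + n) * ih

theorem hypergeometricPowerSeries_eq_negBinomialSeries_mul (a b : K) {c : K}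
    (hc : ∀ n : ℕ, c + n ≠ 0) :
    hypergeometricPowerSeries a b c =
      negBinomialSeries (a + b - c) * hypergeometricPowerSeries (c - a) (c - b) c := by
  refine eq_of_hypergeometricOperator_eq_zero hc
    (hypergeometricOperator_hypergeometricPowerSeries a b hc) ?_ ?_
  · rw [hypergeometricOperator_mul (one_sub_X_mul_derivative_negBinomialSeries _),
      hypergeometricOperator_hypergeometricPowerSeries _ _ hc, mul_zero]
  · simp [hypergeometricPowerSeries, negBinomialSeries]

end Field

end FormalPowerSeries

section Convergence

lemma tsum_coeff_mul_mul_pow {R : Type*} [NormedCommRing R] [CompleteSpace R] {f g : R⟦X⟧} {x : R}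
    (hf : Summable fun n => ‖coeff n f * x ^ n‖) (hg : Summable fun n => ‖coeff n g * x ^ n‖) :
    ∑' n, coeff n (f * g) * x ^ n = (∑' n, coeff n f * x ^ n) * ∑' n, coeff n g * x ^ n := by
  rw [tsum_mul_tsum_eq_tsum_sum_antidiagonal_of_summable_norm hf hg]
  refine tsum_congr fun n => ?_
  rw [coeff_mul, Finset.sum_mul]
  refine Finset.sum_congr rfl fun p hp => ?_
  rw [← Finset.HasAntidiagonal.mem_antidiagonal.mp hp, pow_add]
  ring

lemma summable_norm_mul_pow_of_lt_radius {𝕜 : Type*} [NontriviallyNormedField 𝕜] {u : ℕ → 𝕜}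
    {x : 𝕜} (hx : ‖x‖ₑ < (FormalMultilinearSeries.ofScalars 𝕜 u).radius) :
    Summable fun n => ‖u n * x ^ n‖ := by
  simpa only [FormalMultilinearSeries.ofScalars_apply_eq, smul_eq_mul] using
    (FormalMultilinearSeries.ofScalars 𝕜 u).summable_norm_apply (mem_eball_zero_iff.mpr hx)

lemma one_le_radius_ordinaryHypergeometricSeries {𝕜 : Type*} [RCLike 𝕜] (𝔸 : Type*)
    [NormedDivisionRing 𝔸] [NormedAlgebra 𝕜 𝔸] (a b c : 𝕜) :
    1 ≤ (ordinaryHypergeometricSeries 𝔸 a b c).radius := by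
  by_cases h : ∀ k : ℕ, (k : 𝕜) ≠ -a ∧ (k : 𝕜) ≠ -b ∧ (k : 𝕜) ≠ -c
  · exact (ordinaryHypergeometricSeries_radius_eq_one 𝔸 a b c h).ge
  · obtain ⟨k, hk⟩ : ∃ k : ℕ, a = -k ∨ b = -k ∨ c = -k := by
      simpa only [not_forall, ← not_or, not_not, eq_neg_iff_add_eq_zero, ne_eq, add_comm] using h
    rcases hk with rfl | rfl | rfl
    · simp only [ordinaryHypergeometric_radius_top_of_neg_nat₁, le_top]
    · simp only [ordinaryHypergeometric_radius_top_of_neg_nat₂, le_top]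
    · simp only [ordinaryHypergeometric_radius_top_of_neg_nat₃, le_top]

end Convergence

section EulerTransformation

lemma summable_norm_hypergeometricPowerSeries {𝕜 : Type*} [RCLike 𝕜] (a b c : 𝕜) {x : 𝕜}
    (hx : ‖x‖ < 1) : Summable fun n => ‖coeff n (hypergeometricPowerSeries a b c) * x ^ n‖ := by
  have hx' : ‖x‖ₑ < 1 := by rwa [← ofReal_norm, ENNReal.ofReal_lt_one]
  simpa only [hypergeometricPowerSeries, coeff_mk] using summable_norm_mul_pow_of_lt_radius
    (hx'.trans_le (one_le_radius_ordinaryHypergeometricSeries 𝕜 a b c))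

lemma tsum_hypergeometricPowerSeries {𝕜 : Type*} [RCLike 𝕜] (a b c x : 𝕜) :
    ∑' n, coeff n (hypergeometricPowerSeries a b c) * x ^ n = ordinaryHypergeometric a b c x := by
  simp only [ordinaryHypergeometric_eq_tsum, hypergeometricPowerSeries, coeff_mk, smul_eq_mul]

lemma summable_norm_negBinomialSeries (r : ℝ) {x : ℝ} (hx : |x| < 1) :
    Summable fun n => ‖coeff n (negBinomialSeries r) * x ^ n‖ := by
  have hx' : ‖x‖ₑ < 1 := by rwa [← ofReal_norm, ENNReal.ofReal_lt_one]
  simpa only [negBinomialSeries, coeff_mk, Ring.multichoose_eq] using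
    summable_norm_mul_pow_of_lt_radius
      (hx'.trans_le (Real.one_div_one_sub_rpow_hasFPowerSeriesOnBall_zero r).r_le)

lemma tsum_negBinomialSeries (r : ℝ) {x : ℝ} (hx : |x| < 1) :
    ∑' n, coeff n (negBinomialSeries r) * x ^ n = (1 - x) ^ (-r) := by
  have hx' : ‖x‖ₑ < 1 := by rwa [← ofReal_norm, ENNReal.ofReal_lt_one]
  have hsum := (Real.one_div_one_sub_rpow_hasFPowerSeriesOnBall_zero r).hasSum
    (mem_eball_zero_iff.mpr hx')
  simp only [FormalMultilinearSeries.ofScalars_apply_eq, smul_eq_mul, zero_add] at hsum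
  simp only [negBinomialSeries, coeff_mk, Ring.multichoose_eq, hsum.tsum_eq]
  rw [Real.rpow_neg (sub_nonneg.mpr (le_of_abs_le hx.le)), one_div]

theorem ordinaryHypergeometric_euler (a b : ℝ) {c x : ℝ} (hc : ∀ n : ℕ, c + n ≠ 0)
    (hx : |x| < 1) :
    ordinaryHypergeometric a b c x =
      (1 - x) ^ (c - a - b) * ordinaryHypergeometric (c - a) (c - b) c x := by
  calc ordinaryHypergeometric a b c x
      = ∑' n, coeff n (hypergeometricPowerSeries a b c) * x ^ n :=
        (tsum_hypergeometricPowerSeries a b c x).symm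
    _ = ∑' n, coeff n (negBinomialSeries (a + b - c) *
          hypergeometricPowerSeries (c - a) (c - b) c) * x ^ n := by
        rw [hypergeometricPowerSeries_eq_negBinomialSeries_mul a b hc]
    _ = (∑' n, coeff n (negBinomialSeries (a + b - c)) * x ^ n) *
          ∑' n, coeff n (hypergeometricPowerSeries (c - a) (c - b) c) * x ^ n :=
        tsum_coeff_mul_mul_pow (summable_norm_negBinomialSeries _ hx)
          (summable_norm_hypergeometricPowerSeries _ _ _ hx)
    _ = (1 - x) ^ (-(a + b - c)) * ordinaryHypergeometric (c - a) (c - b) c x := by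
        rw [tsum_negBinomialSeries _ hx, tsum_hypergeometricPowerSeries]
    _ = _ := by rw [show -(a + b - c) = c - a - b by ring]

end EulerTransformation

lemma poch_eq_ascPochhammer_eval (α : ℝ) (n : ℕ) : poch α n = (ascPochhammer ℝ n).eval α := by
  induction n with
  | zero => simp [poch]
  | succ n ih => rw [poch, ih, ascPochhammer_succ_eval]

lemma gauss2F1_eq_ordinaryHypergeometric (α β γ z : ℝ) :
    Gauss2F1 α β γ z = ordinaryHypergeometric α β γ z := by
  rw [Gauss2F1, ordinaryHypergeometric_eq_tsum]
  refine tsum_congr fun n => ?_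
  simp only [poch_eq_ascPochhammer_eval, smul_eq_mul, div_eq_mul_inv, mul_inv]
  ring

lemma gamma_add_natCast {x : ℝ} (hx : ∀ k : ℕ, x ≠ -k) (n : ℕ) :
    Real.Gamma (x + n) = (ascPochhammer ℝ n).eval x * Real.Gamma x := by
  induction n with
  | zero => simp
  | succ n ih =>
    rw [Nat.cast_succ, ← add_assoc, Real.Gamma_add_one (mt eq_neg_of_add_eq_zero_left (hx n)), ih,
      ascPochhammer_succ_eval]
    ring

lemma genBinom_two_mul_self (x : ℝ) :
    genBinom (2 * x) x =
      4 ^ x / √Real.pi * (Real.Gamma (x + 1 / 2) / Real.Gamma (x + 1)) := by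
  have duplication :
      Real.Gamma (x + 1 / 2) * Real.Gamma (x + 1) = Real.Gamma (2 * x + 1) * √Real.pi / 4 ^ x := by
    have h := Real.Gamma_mul_Gamma_add_half (x + 1 / 2)
    rwa [show x + 1 / 2 + 1 / 2 = x + 1 by ring, show 2 * (x + 1 / 2) = 2 * x + 1 by ring,
      show 1 - (2 * x + 1) = -(2 * x) by ring, Real.rpow_neg two_pos.le,
      Real.rpow_mul two_pos.le, Real.rpow_two, show (2 : ℝ) ^ 2 = 4 by norm_num,
      mul_right_comm, ← div_eq_mul_inv] at h
  rw [genBinom, show 2 * x - x + 1 = x + 1 by ring]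
  by_cases hΓ : Real.Gamma (x + 1) = 0
  · simp only [hΓ, mul_zero, div_zero]
  · field_simp at duplication ⊢
    linear_combination -duplication

lemma four_rpow_div_genBinom_two_mul_self {x : ℝ} (hx : x ≠ 0) :
    4 ^ x / (genBinom (2 * x) x * x) = √Real.pi * (Real.Gamma x / Real.Gamma (x + 1 / 2)) := by
  rw [genBinom_two_mul_self, Real.Gamma_add_one hx]
  field_simp

lemma two_mul_rpow_div_genBinom_two_mul_self {x z : ℝ} (hx : x ≠ 0) (hz : 0 ≤ z) :
    (2 * z) ^ (2 * x) / (genBinom (2 * x) x * x) =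
      √Real.pi * (Real.Gamma x / Real.Gamma (x + 1 / 2)) * z ^ (2 * x) := by
  rw [Real.mul_rpow two_pos.le hz, Real.rpow_mul two_pos.le, Real.rpow_two,
    show (2 : ℝ) ^ 2 = 4 by norm_num, mul_div_right_comm, four_rpow_div_genBinom_two_mul_self hx]

theorem phiHCB_one_eq_ordinaryHypergeometric {a : ℝ} (ha : ∀ j : ℕ, a ≠ -(j : ℝ) / 2) {z : ℝ}
    (hz : 0 < z) :
    PhiHCB 1 a z =
      4 ^ a / (genBinom (2 * a) a * a) * z ^ (2 * a) *
        ordinaryHypergeometric a 1 (a + 1 / 2) (z ^ 2) := by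
  have ha₀ (n : ℕ) : a ≠ -n := fun h => ha (2 * n) (by push_cast; linarith)
  have ha₁ (n : ℕ) : a + 1 / 2 ≠ -n := fun h => ha (2 * n + 1) (by push_cast; linarith)
  have hterm (n : ℕ) :
      (2 * z) ^ (2 * (n + a)) / (genBinom (2 * (n + a)) (n + a) * (n + a)) =
        √Real.pi * (Real.Gamma a / Real.Gamma (a + 1 / 2)) * z ^ (2 * a) *
          (coeff n (hypergeometricPowerSeries a 1 (a + 1 / 2)) * (z ^ 2) ^ n) := by
    have hpow : z ^ (2 * (a + n)) = z ^ (2 * a) * (z ^ 2) ^ n := by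
      rw [mul_add, Real.rpow_add hz, Real.rpow_mul hz.le 2 n, Real.rpow_two, Real.rpow_natCast]
    rw [add_comm (n : ℝ) a, two_mul_rpow_div_genBinom_two_mul_self
      (mt eq_neg_of_add_eq_zero_left (ha₀ n)) hz.le, hpow, add_right_comm a,
      gamma_add_natCast ha₀, gamma_add_natCast ha₁, hypergeometricPowerSeries, coeff_mk,
      ordinaryHypergeometricCoefficient, ascPochhammer_eval_one]
    field_simp
  simp only [PhiHCB, zpow_one, hterm]
  rw [tsum_mul_left, tsum_hypergeometricPowerSeries,
    four_rpow_div_genBinom_two_mul_self (by simpa using ha₀ 0)]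

/-- For every real `a` not of the form `-j/2` (`j ∈ ℤ_{≥0}`) and every real `z` with `0 < z < 1`:
`Φ_HCB(1,a,z) = (4^a/(C(2a,a) a)) (z^{2a}/√(1-z²)) ₂F₁(1/2, a-1/2; a+1/2; z²)`. -/
theorem phiHCB_one_hypergeometric (a : ℝ) (ha : ∀ j : ℕ, a ≠ -(j : ℝ) / 2)
    (z : ℝ) (hz0 : 0 < z) (hz1 : z < 1) :
    PhiHCB 1 a z =
      (4 : ℝ) ^ a / (genBinom (2 * a) a * a) * (z ^ (2 * a) / Real.sqrt (1 - z ^ 2)) *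
        Gauss2F1 (1 / 2) (a - 1 / 2) (a + 1 / 2) (z ^ 2) := by
  have hc (n : ℕ) : a + 1 / 2 + n ≠ 0 := fun h => ha (2 * n + 1) (by push_cast; linarith)
  have hz : |z ^ 2| < 1 := by
    rw [abs_of_nonneg (sq_nonneg z)]
    exact pow_lt_one₀ hz0.le hz1 two_ne_zero
  have hsqrt : (1 - z ^ 2) ^ (-(1 / 2) : ℝ) = (√(1 - z ^ 2))⁻¹ := by
    rw [Real.rpow_neg (sub_nonneg.mpr (le_of_abs_le hz.le)), ← Real.sqrt_eq_rpow]
  calc PhiHCB 1 a z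
      = 4 ^ a / (genBinom (2 * a) a * a) * z ^ (2 * a) *
          ordinaryHypergeometric a 1 (a + 1 / 2) (z ^ 2) :=
        phiHCB_one_eq_ordinaryHypergeometric ha hz0
    _ = 4 ^ a / (genBinom (2 * a) a * a) * z ^ (2 * a) *
          ((√(1 - z ^ 2))⁻¹ * Gauss2F1 (1 / 2) (a - 1 / 2) (a + 1 / 2) (z ^ 2)) := by
        rw [ordinaryHypergeometric_euler a 1 hc hz, gauss2F1_eq_ordinaryHypergeometric, ← hsqrt]
        ring_nf
    _ = _ := by ring
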